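/- For every n ≥ 2 there are, up to isomorphism, exactly two almost irregular graphs of order n: there exist almost irregular graphs G₁ and G₂ on n vertices with G₁ connected and G₂ disconnected, G₁ not isomorphic to G₂, and every almost irregular graph of order n is isomorphic to G₁ or to G₂. -/

import Mathlib

/-- The degree of a vertex (as the number of neighbors). -/
noncomputable def ndeg {V : Type*} (G : SimpleGraph V) (v : V) : ℕ :=
  {w | G.Adj v w}.ncard

/-- A graph is almost irregular if there is exactly one unordered pair of distinct
vertices having equal degrees (all other degrees are pairwise distinct and different
from the repeated one). -/
def AlmostIrregular {V : Type*} (G : SimpleGraph V) : Prop :=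
  ∃ u v : V, u ≠ v ∧ ndeg G u = ndeg G v ∧
    ∀ x y : V, x ≠ y → ndeg G x = ndeg G y → ((x = u ∧ y = v) ∨ (x = v ∧ y = u))

/-!
A graph on `n` vertices is almost irregular iff it has exactly `n - 1` distinct degrees. Since an
isolated vertex and a universal one exclude each other, `G` or `Gᶜ` has no isolated vertex, and its
degrees are then exactly `1, …, n - 1`. Such a graph is unique: it has a universal vertex `v`, and
deleting `v`, isolated in `Gᶜ`, from `Gᶜ` leaves a graph on `n - 1` vertices with degrees
`1, …, n - 2`, so induction applies.
-/

lemma card_compl_singleton_add_one {α : Type*} [Finite α] (a : α) :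
    Nat.card ({a}ᶜ : Set α) + 1 = Nat.card α := by
  simpa using Set.ncard_compl_add_ncard {a}

lemma not_injective_iff_ncard_range_lt_card {α β : Type*} [Finite α] {f : α → β} :
    ¬ Function.Injective f ↔ (Set.range f).ncard < Nat.card α := by
  have le : (Set.range f).ncard ≤ Nat.card α := by
    simpa using Set.ncard_image_le (f := f) (s := Set.univ)
  have eq_iff := Set.ncard_image_iff (f := f) (s := Set.univ)
  rw [Set.image_univ, Set.ncard_univ, Set.injOn_univ] at eq_iff
  rw [← eq_iff, le.lt_iff_ne]

section Degrees

variable {V : Type*} [Finite V] {G : SimpleGraph V} {v : V}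

lemma ndeg_compl_add_ndeg_add_one (G : SimpleGraph V) (v : V) :
    ndeg Gᶜ v + ndeg G v + 1 = Nat.card V := by
  have union : Gᶜ.neighborSet v ∪ G.neighborSet v = {v}ᶜ := by
    rw [Set.union_comm, G.neighborSet_union_compl_neighborSet_eq]
  have disjoint : Disjoint (Gᶜ.neighborSet v) (G.neighborSet v) :=
    (G.compl_neighborSet_disjoint v).symm
  calc (Gᶜ.neighborSet v).ncard + (G.neighborSet v).ncard + 1
      = ({v}ᶜ : Set V).ncard + 1 := by rw [← union, Set.ncard_union_eq disjoint]
    _ = Nat.card V := card_compl_singleton_add_one v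

lemma ndeg_lt_card (G : SimpleGraph V) (v : V) : ndeg G v < Nat.card V := by
  have := ndeg_compl_add_ndeg_add_one G v
  lia

lemma ndeg_eq_zero_iff_isIsolated : ndeg G v = 0 ↔ G.IsIsolated v := by
  rw [← G.neighborSet_eq_empty]
  exact Set.ncard_eq_zero

lemma ndeg_add_one_eq_card_iff_isUniversal : ndeg G v + 1 = Nat.card V ↔ G.IsUniversal v := by
  rw [← SimpleGraph.isIsolated_compl_iff_isUniversal, ← ndeg_eq_zero_iff_isIsolated]
  have := ndeg_compl_add_ndeg_add_one G v
  lia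

lemma range_ndeg_subset_Ico_of_forall_not_isIsolated (no_isolated : ∀ v, ¬ G.IsIsolated v) :
    Set.range (ndeg G) ⊆ Set.Ico 1 (Nat.card V) := by
  rintro _ ⟨v, rfl⟩
  have : ndeg G v ≠ 0 := ndeg_eq_zero_iff_isIsolated.not.mpr (no_isolated v)
  exact ⟨Nat.one_le_iff_ne_zero.mpr this, ndeg_lt_card G v⟩

end Degrees

lemma ndeg_induce_compl_singleton_of_isIsolated {V : Type*} {G : SimpleGraph V} {v : V}
    (hv : G.IsIsolated v) (x : ({v}ᶜ : Set V)) : ndeg (G.induce {v}ᶜ) x = ndeg G x := by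
  have image : Subtype.val '' (G.induce {v}ᶜ).neighborSet x = G.neighborSet x := by
    ext w
    have : G.Adj x w → w ≠ v := by
      rintro hxw rfl
      exact hv x hxw.symm
    simpa using this
  calc ((G.induce {v}ᶜ).neighborSet x).ncard
      = (Subtype.val '' (G.induce {v}ᶜ).neighborSet x).ncard :=
        (Set.ncard_image_of_injective _ Subtype.val_injective).symm
    _ = (G.neighborSet x).ncard := by rw [image]

section Isomorphism

variable {V W : Type*} {G : SimpleGraph V} {H : SimpleGraph W}

lemma nonempty_iso_of_compl (h : Nonempty (Gᶜ ≃g Hᶜ)) : Nonempty (G ≃g H) := by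
  obtain ⟨e⟩ := h
  refine ⟨e.toEquiv, fun {a b} => ?_⟩
  have he := e.map_adj_iff (v := a) (w := b)
  have hab := e.injective.eq_iff (a := a) (b := b)
  by_cases h : a = b
  · simp [h]
  · simp only [SimpleGraph.compl_adj, ne_eq, hab, h, not_false_eq_true, true_and] at he
    exact not_iff_not.mp he

lemma nonempty_iso_of_induce_compl_singleton_of_isIsolated {v : V} {w : W}
    (hv : G.IsIsolated v) (hw : H.IsIsolated w)
    (h : Nonempty (G.induce {v}ᶜ ≃g H.induce {w}ᶜ)) : Nonempty (G ≃g H) := by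
  classical
  obtain ⟨e⟩ := h
  let optV : Option ({v}ᶜ : Set V) ≃ V := Equiv.optionSubtypeNe v
  let optW : Option ({w}ᶜ : Set W) ≃ W := Equiv.optionSubtypeNe w
  refine ⟨optV.symm.trans (e.toEquiv.optionCongr.trans optW), fun {a b} => ?_⟩
  obtain ⟨a, rfl⟩ := optV.surjective a
  obtain ⟨b, rfl⟩ := optV.surjective b
  simp only [Equiv.trans_apply, Equiv.symm_apply_apply]
  cases a with
  | none => exact iff_of_false (hw _) (hv _)
  | some a =>
    cases b with
    | none => exact iff_of_false (fun h => hw _ h.symm) (fun h => hv _ h.symm)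
    | some b => exact e.map_adj_iff

end Isomorphism

/-- The degrees occurring in `G` are exactly `1, …, |V| - 1`. For nonempty `V` these are the
almost irregular graphs without isolated vertices, and they turn out to be the connected ones. -/
def HasFullDegrees {V : Type*} (G : SimpleGraph V) : Prop :=
  Set.range (ndeg G) = Set.Ico 1 (Nat.card V)

section AlmostIrregular

variable {V : Type*} {G : SimpleGraph V}

lemma AlmostIrregular.nontrivial (h : AlmostIrregular G) : Nontrivial V :=
  let ⟨u, v, huv, _⟩ := h
  ⟨u, v, huv⟩

lemma almostIrregular_iff_ncard_range_add_one_eq_card [Finite V] :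
    AlmostIrregular G ↔ (Set.range (ndeg G)).ncard + 1 = Nat.card V := by
  have unique_collision := Set.ncard_le_ncard_image_add_one_iff Set.univ (ndeg G)
  simp only [Set.image_univ, Set.ncard_univ, Set.mem_univ, true_imp_iff,
    Set.pair_eq_pair_iff] at unique_collision
  calc AlmostIrregular G
      ↔ ¬ Function.Injective (ndeg G) ∧ Nat.card V ≤ (Set.range (ndeg G)).ncard + 1 := by
        rw [unique_collision, Function.not_injective_iff]
        constructor
        · rintro ⟨u, v, huv, hdeg, hunique⟩
          refine ⟨⟨u, v, hdeg, huv⟩, fun a b c d hab hcd hne hne' => ?_⟩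
          grind
        · rintro ⟨⟨u, v, hdeg, huv⟩, hunique⟩
          exact ⟨u, v, huv, hdeg, fun x y hxy hd => hunique x y u v hd hdeg hxy huv⟩
    _ ↔ (Set.range (ndeg G)).ncard + 1 = Nat.card V := by
        rw [not_injective_iff_ncard_range_lt_card]
        lia

lemma AlmostIrregular.compl [Finite V] (h : AlmostIrregular G) : AlmostIrregular Gᶜ := by
  have ndeg_eq_iff (x y : V) : ndeg Gᶜ x = ndeg Gᶜ y ↔ ndeg G x = ndeg G y := by
    have := ndeg_compl_add_ndeg_add_one G x
    have := ndeg_compl_add_ndeg_add_one G y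
    lia
  simpa only [AlmostIrregular, ndeg_eq_iff] using h

lemma HasFullDegrees.almostIrregular [Finite V] [Nonempty V] (h : HasFullDegrees G) :
    AlmostIrregular G := by
  rw [almostIrregular_iff_ncard_range_add_one_eq_card, h, Set.ncard_Ico_nat]
  exact Nat.sub_add_cancel Nat.card_pos

lemma AlmostIrregular.hasFullDegrees [Finite V] (h : AlmostIrregular G)
    (no_isolated : ∀ v, ¬ G.IsIsolated v) : HasFullDegrees G := by
  apply Set.eq_of_subset_of_ncard_le (range_ndeg_subset_Ico_of_forall_not_isIsolated no_isolated)
  rw [almostIrregular_iff_ncard_range_add_one_eq_card] at h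
  rw [Set.ncard_Ico_nat]
  lia

lemma AlmostIrregular.hasFullDegrees_or_compl [Finite V] (h : AlmostIrregular G) :
    HasFullDegrees G ∨ HasFullDegrees Gᶜ := by
  have := h.nontrivial
  by_cases isolated : ∃ v, G.IsIsolated v
  · obtain ⟨v, hv⟩ := isolated
    have universal : Gᶜ.IsUniversal v := SimpleGraph.isUniversal_compl_iff_isIsolated.mpr hv
    exact .inr (h.compl.hasFullDegrees universal.not_isIsolated)
  · exact .inl (h.hasFullDegrees (not_exists.mp isolated))

end AlmostIrregular

namespace HasFullDegrees

variable {V : Type*} {G : SimpleGraph V}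

lemma exists_ndeg_eq (h : HasFullDegrees G) {d : ℕ} (pos : 1 ≤ d) (lt : d < Nat.card V) :
    ∃ v, ndeg G v = d :=
  h.ge ⟨pos, lt⟩

lemma one_le_ndeg (h : HasFullDegrees G) (v : V) : 1 ≤ ndeg G v :=
  (h.le ⟨v, rfl⟩).1

lemma exists_isUniversal [Finite V] (h : HasFullDegrees G) (two_le : 2 ≤ Nat.card V) :
    ∃ v, G.IsUniversal v := by
  obtain ⟨v, hv⟩ := h.exists_ndeg_eq (d := Nat.card V - 1) (by lia) (by lia)
  exact ⟨v, ndeg_add_one_eq_card_iff_isUniversal.mp (by lia)⟩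

lemma eq_top_of_card_le_two [Finite V] (h : HasFullDegrees G) (le_two : Nat.card V ≤ 2) :
    G = ⊤ := by
  refine SimpleGraph.eq_top_iff_forall_isUniversal.mpr fun v => ?_
  have := h.one_le_ndeg v
  have := ndeg_lt_card G v
  exact ndeg_add_one_eq_card_iff_isUniversal.mp (by lia)

lemma induce_compl_of_isUniversal [Finite V] (h : HasFullDegrees G) (three_le : 3 ≤ Nat.card V)
    {v : V} (hv : G.IsUniversal v) : HasFullDegrees (Gᶜ.induce {v}ᶜ) := by
  have isolated : Gᶜ.IsIsolated v := SimpleGraph.isIsolated_compl_iff_isUniversal.mpr hv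
  have ndeg_v : ndeg G v + 1 = Nat.card V := ndeg_add_one_eq_card_iff_isUniversal.mpr hv
  have card_compl := card_compl_singleton_add_one v
  have ndeg_add (x : ({v}ᶜ : Set V)) :
      ndeg (Gᶜ.induce {v}ᶜ) x + ndeg G x + 1 = Nat.card V := by
    rw [ndeg_induce_compl_singleton_of_isIsolated isolated, ndeg_compl_add_ndeg_add_one]
  have exists_ndeg_eq {d : ℕ} (pos : 1 ≤ d) (lt : d < Nat.card ({v}ᶜ : Set V)) :
      ∃ x, ndeg (Gᶜ.induce {v}ᶜ) x = d := by
    obtain ⟨x, hx⟩ := h.exists_ndeg_eq (d := Nat.card V - 1 - d) (by lia) (by lia)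
    have hxv : x ≠ v := by
      rintro rfl
      lia
    have := ndeg_add ⟨x, hxv⟩
    exact ⟨⟨x, hxv⟩, by lia⟩
  have no_isolated : ∀ x, ¬ (Gᶜ.induce {v}ᶜ).IsIsolated x := by
    have : Nontrivial ({v}ᶜ : Set V) := Finite.one_lt_card_iff_nontrivial.mp (by lia)
    obtain ⟨z, hz⟩ := exists_ndeg_eq (d := Nat.card ({v}ᶜ : Set V) - 1) (by lia) (by lia)
    have universal : (Gᶜ.induce {v}ᶜ).IsUniversal z :=
      ndeg_add_one_eq_card_iff_isUniversal.mp (by lia)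
    exact universal.not_isIsolated
  exact (range_ndeg_subset_Ico_of_forall_not_isIsolated no_isolated).antisymm
    fun d hd => exists_ndeg_eq hd.1 hd.2

end HasFullDegrees

theorem HasFullDegrees.nonempty_iso {V W : Type*} [Finite V] [Finite W]
    {G : SimpleGraph V} {H : SimpleGraph W}
    (hG : HasFullDegrees G) (hH : HasFullDegrees H) (card_eq : Nat.card V = Nat.card W) :
    Nonempty (G ≃g H) := by
  induction hn : Nat.card V using Nat.strong_induction_on generalizing V W with | h n ih
  by_cases le_two : n ≤ 2
  · obtain rfl := hG.eq_top_of_card_le_two (by lia)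
    obtain rfl := hH.eq_top_of_card_le_two (by lia)
    exact (Finite.card_eq.mp card_eq).map SimpleGraph.Iso.completeGraph
  obtain ⟨v, hv⟩ := hG.exists_isUniversal (by lia)
  obtain ⟨w, hw⟩ := hH.exists_isUniversal (by lia)
  have card_compl_v := card_compl_singleton_add_one v
  have card_compl_w := card_compl_singleton_add_one w
  apply nonempty_iso_of_compl
  apply nonempty_iso_of_induce_compl_singleton_of_isIsolated
    (SimpleGraph.isIsolated_compl_iff_isUniversal.mpr hv)
    (SimpleGraph.isIsolated_compl_iff_isUniversal.mpr hw)
  exact ih (Nat.card ({v}ᶜ : Set V)) (by lia) (hG.induce_compl_of_isUniversal (by lia) hv)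
    (hH.induce_compl_of_isUniversal (by lia) hw) (by lia) rfl

/-- The graph on `{0, …, n - 1}` in which distinct `i` and `j` are adjacent when
`i + j ≥ n - 1`: the connected almost irregular graph of order `n ≥ 2`. The inequality is written
`i.rev ≤ j` to exhibit each neighborhood as an interval with at most one vertex removed. -/
def antiregularGraph (n : ℕ) : SimpleGraph (Fin n) where
  Adj i j := i ≠ j ∧ i.rev ≤ j
  symm := ⟨fun _ _ h => ⟨h.1.symm, Fin.rev_le_iff.mp h.2⟩⟩
  loopless := ⟨fun _ h => h.1 rfl⟩

lemma ndeg_antiregularGraph {n : ℕ} (i : Fin n) :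
    ndeg (antiregularGraph n) i = if i.rev ≤ i then (i : ℕ) else i + 1 := by
  have neighborSet_eq : (antiregularGraph n).neighborSet i = ↑((Finset.Ici i.rev).erase i) := by
    ext j
    simp [antiregularGraph, eq_comm, and_comm]
  calc ((antiregularGraph n).neighborSet i).ncard
      = ((Finset.Ici i.rev).erase i).card := by rw [neighborSet_eq, Set.ncard_coe_finset]
    _ = if i.rev ≤ i then (i : ℕ) else i + 1 := by
      have card_Ici : (Finset.Ici i.rev).card = i + 1 := by
        rw [Fin.card_Ici, Fin.val_rev]
        lia
      simp [Finset.card_erase_eq_ite, card_Ici]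

lemma hasFullDegrees_antiregularGraph {n : ℕ} (hn : n ≠ 1) :
    HasFullDegrees (antiregularGraph n) := by
  ext d
  simp only [Set.mem_range, Set.mem_Ico, Nat.card_fin, ndeg_antiregularGraph, Fin.le_def,
    Fin.val_rev]
  constructor
  · rintro ⟨i, rfl⟩
    split_ifs <;> lia
  · rintro ⟨pos, lt⟩
    by_cases upper : n ≤ 2 * d + 1
    · exact ⟨⟨d, lt⟩, if_pos (by lia)⟩
    · exact ⟨⟨d - 1, by lia⟩, (if_neg (by lia)).trans (Nat.sub_add_cancel pos)⟩

theorem AlmostIrregular.nonempty_iso_antiregularGraph_or_compl {V : Type*} [Finite V]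
    {G : SimpleGraph V} (h : AlmostIrregular G) :
    Nonempty (G ≃g antiregularGraph (Nat.card V)) ∨
      Nonempty (G ≃g (antiregularGraph (Nat.card V))ᶜ) := by
  have := h.nontrivial
  have full := hasFullDegrees_antiregularGraph (Finite.one_lt_card (α := V)).ne'
  refine h.hasFullDegrees_or_compl.imp (fun hG => hG.nonempty_iso full (by simp)) fun hG => ?_
  apply nonempty_iso_of_compl
  rw [compl_compl]
  exact hG.nonempty_iso full (by simp)

/-- Up to isomorphism there are exactly two almost irregular graphs of each order
`n ≥ 2`: one connected and one disconnected. -/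
theorem almost_irregular_two_graphs (n : ℕ) (hn : 2 ≤ n) :
    ∃ G₁ G₂ : SimpleGraph (Fin n),
      AlmostIrregular G₁ ∧ AlmostIrregular G₂ ∧
      G₁.Connected ∧ ¬ G₂.Connected ∧
      IsEmpty (G₁ ≃g G₂) ∧
      ∀ (V : Type) [Fintype V] (G : SimpleGraph V), Fintype.card V = n →
        AlmostIrregular G → (Nonempty (G ≃g G₁) ∨ Nonempty (G ≃g G₂)) := by
  have : Nontrivial (Fin n) := Fin.nontrivial_iff_two_le.mpr hn
  have full : HasFullDegrees (antiregularGraph n) := hasFullDegrees_antiregularGraph (by lia)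
  obtain ⟨v, universal⟩ := full.exists_isUniversal (by simpa using hn)
  have connected : (antiregularGraph n).Connected := .of_isUniversal universal
  have not_connected : ¬ (antiregularGraph n)ᶜ.Connected := fun h =>
    h.preconnected.not_isIsolated v (SimpleGraph.isIsolated_compl_iff_isUniversal.mpr universal)
  refine ⟨antiregularGraph n, (antiregularGraph n)ᶜ, full.almostIrregular,
    full.almostIrregular.compl, connected, not_connected,
    ⟨fun e => not_connected (e.connected_iff.mp connected)⟩, fun V _ G card_eq hG => ?_⟩
  obtain rfl : Nat.card V = n := Nat.card_eq_fintype_card.trans card_eq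
  exact hG.nonempty_iso_antiregularGraph_or_compl
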